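/- arXiv:1905.04375 — 3 statements merged into one kernel-verified Lean document; each statement's English description precedes it below -/
import Mathlib

section
/- Let (Γ,+,d) be a metric Abelian monoid whose pseudometric d is homogeneous. Then the cancellation property holds: for all γ₁,γ₂,η ∈ Γ, if d(γ₁+η, γ₂+η) = 0 then d(γ₁,γ₂) = 0. -/
open MeasureTheory Filter

/-- A pseudometric on `Γ`: reflexive-zero, symmetric, triangle inequality. -/
def IsPseudoMetric {Γ : Type*} (d : Γ → Γ → ℝ) : Prop :=
  (∀ x, d x x = 0) ∧ (∀ x y, d x y = d y x) ∧ (∀ x y z, d x z ≤ d x y + d y z)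

/-- A metric Abelian monoid: an additive commutative monoid with a pseudometric
for which addition is 1-Lipschitz in each argument. -/
def IsMetricAbelianMonoid {Γ : Type*} [AddCommMonoid Γ] (d : Γ → Γ → ℝ) : Prop :=
  IsPseudoMetric d ∧ ∀ a b c : Γ, d (a + b) (a + c) ≤ d b c

/-- `φ : [1,∞) → [0,∞)` is admissible with constant `D ≥ 0`: non-decreasing,
summable against `dt/t²`, and `s·∫_s^∞ φ(t)/t² dt ≤ (D/8)·φ(s)` for all `s ≥ 1`. -/
def AdmissibleWith (φ : ℝ → ℝ) (D : ℝ) : Prop :=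
  (∀ t, 1 ≤ t → 0 ≤ φ t) ∧ MonotoneOn φ (Set.Ici 1) ∧ 0 ≤ D ∧
  (∀ s, 1 ≤ s → IntegrableOn (fun t => φ t / t ^ 2) (Set.Ioi s)) ∧
  (∀ s, 1 ≤ s → s * ∫ t in Set.Ioi s, φ t / t ^ 2 ≤ D / 8 * φ s)

def Admissible (φ : ℝ → ℝ) : Prop := ∃ D, AdmissibleWith φ D

/-- A sequence `γ : ℕ → Γ` is quasi-linear with defect bounded by `φ`
(with respect to the pseudometric `d`). -/
def QuasiLinear {Γ : Type*} [AddCommMonoid Γ] (d : Γ → Γ → ℝ) (φ : ℝ → ℝ)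
    (γ : ℕ → Γ) : Prop :=
  γ 0 = 0 ∧ ∀ m n : ℕ, 1 ≤ m → 1 ≤ n →
    d (γ (m + n)) (γ m + γ n) ≤ φ ((m + n : ℕ) : ℝ)

/-- The asymptotic distance `lim_{n→∞} d(γ₁(n),γ₂(n))/n`, realized as a `limsup`
(for quasi-linear sequences the limit exists, so this is that limit). -/
noncomputable def dista {Γ : Type*} (d : Γ → Γ → ℝ) (γ₁ γ₂ : ℕ → Γ) : ℝ :=
  Filter.limsup (fun n : ℕ => d (γ₁ n) (γ₂ n) / n) Filter.atTop

/-!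
Exchanging the summands one at a time, with `η` as a catalyst, gives
`d (n • γ₁ + η) (n • γ₂ + η) ≤ n • d (γ₁ + η) (γ₂ + η)`. Removing the single remaining `η` costs at
most `2 • d 0 η`, independently of `n`. Homogeneity turns this into
`n • d γ₁ γ₂ ≤ n • d (γ₁ + η) (γ₂ + η) + 2 • d 0 η`, and letting `n → ∞` shows that translations are
isometries.
-/

theorem le_of_forall_nsmul_le_nsmul_add {G : Type*} [AddCommGroup G] [LinearOrder G]
    [IsOrderedAddMonoid G] [Archimedean G] {a b c : G} (hle : ∀ n : ℕ, n • a ≤ n • b + c) :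
    a ≤ b := by
  by_contra! hlt
  obtain ⟨n, hn⟩ := exists_lt_nsmul (sub_pos.mpr hlt) c
  rw [nsmul_sub, lt_sub_iff_add_lt'] at hn
  exact hn.not_ge (hle n)

namespace IsMetricAbelianMonoid

variable {Γ : Type*} [AddCommMonoid Γ] {d : Γ → Γ → ℝ}

theorem add_right_le (h : IsMetricAbelianMonoid d) (a b c : Γ) : d (a + c) (b + c) ≤ d a b := by
  simpa only [add_comm c] using h.2 c a b

theorem nsmul_add_le (h : IsMetricAbelianMonoid d) (a b c : Γ) (n : ℕ) :
    d (n • a + c) (n • b + c) ≤ n • d (a + c) (b + c) := by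
  obtain ⟨⟨dist_self, -, triangle⟩, add_left_le⟩ := h
  induction n with
  | zero => simp [dist_self]
  | succ n ih =>
    calc d ((n + 1) • a + c) ((n + 1) • b + c)
        = d (n • a + (a + c)) (b + (n • b + c)) := by
          rw [succ_nsmul, succ_nsmul', add_assoc, add_assoc]
      _ ≤ d (n • a + (a + c)) (n • a + (b + c)) + d (n • a + (b + c)) (b + (n • b + c)) :=
        triangle _ _ _
      _ = d (n • a + (a + c)) (n • a + (b + c)) + d (b + (n • a + c)) (b + (n • b + c)) := by
        rw [add_left_comm (n • a) b c]
      _ ≤ d (a + c) (b + c) + n • d (a + c) (b + c) :=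
        add_le_add (add_left_le _ _ _) ((add_left_le _ _ _).trans ih)
      _ = (n + 1) • d (a + c) (b + c) := (succ_nsmul' _ n).symm

theorem self_add_right_le (h : IsMetricAbelianMonoid d) (a c : Γ) : d a (a + c) ≤ d 0 c := by
  simpa only [add_zero] using h.2 a 0 c

theorem le_add_right_add_two_nsmul (h : IsMetricAbelianMonoid d) (a b c : Γ) :
    d a b ≤ d (a + c) (b + c) + 2 • d 0 c := by
  have ha : d a (a + c) ≤ d 0 c := h.self_add_right_le a c
  have hb : d b (b + c) ≤ d 0 c := h.self_add_right_le b c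
  obtain ⟨⟨-, symm, triangle⟩, -⟩ := h
  calc d a b
      ≤ d a (a + c) + d (a + c) b := triangle _ _ _
    _ ≤ d a (a + c) + (d (a + c) (b + c) + d (b + c) b) := by gcongr; exact triangle _ _ _
    _ = d a (a + c) + (d (a + c) (b + c) + d b (b + c)) := by rw [symm (b + c) b]
    _ ≤ d 0 c + (d (a + c) (b + c) + d 0 c) := by gcongr
    _ = d (a + c) (b + c) + 2 • d 0 c := by rw [two_nsmul, add_left_comm]

end IsMetricAbelianMonoid

theorem mam_homogeneous_cancellation_general {Γ : Type*} [AddCommMonoid Γ]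
    (d : Γ → Γ → ℝ) (h : IsMetricAbelianMonoid d)
    (hhom : ∀ (n : ℕ) (γ γ' : Γ), d (n • γ) (n • γ') = (n : ℝ) * d γ γ') (γ₁ γ₂ η : Γ) :
    d (γ₁ + η) (γ₂ + η) = d γ₁ γ₂ := by
  refine le_antisymm (h.add_right_le γ₁ γ₂ η)
    (le_of_forall_nsmul_le_nsmul_add (c := 2 • d 0 η) fun n ↦ ?_)
  calc n • d γ₁ γ₂
      = d (n • γ₁) (n • γ₂) := by rw [hhom, nsmul_eq_mul]
    _ ≤ d (n • γ₁ + η) (n • γ₂ + η) + 2 • d 0 η := h.le_add_right_add_two_nsmul _ _ η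
    _ ≤ n • d (γ₁ + η) (γ₂ + η) + 2 • d 0 η := by gcongr; exact h.nsmul_add_le γ₁ γ₂ η n

/-- If the pseudometric of a metric Abelian monoid is homogeneous, then the
cancellation property holds. -/
theorem mam_homogeneous_cancellation {Γ : Type*} [AddCommMonoid Γ]
    (d : Γ → Γ → ℝ) (h : IsMetricAbelianMonoid d)
    (hhom : ∀ (n : ℕ) (γ γ' : Γ), d (n • γ) (n • γ') = (n : ℝ) * d γ γ')
    (γ₁ γ₂ η : Γ) (hzero : d (γ₁ + η) (γ₂ + η) = 0) :
    d γ₁ γ₂ = 0 :=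
  (mam_homogeneous_cancellation_general d h hhom γ₁ γ₂ η).symm.trans hzero
end

section
/- Let (Γ,+,d) be a metric Abelian monoid, φ an admissible function with admissibility constant D_φ, and γ̄ a quasi-linear sequence with defect bounded by φ. Then for all m,n ∈ ℕ with m,n ≥ 1, d(γ(m·n), m•γ(n)) ≤ 8·m·n·∫_n^∞ φ(t)/t² dt ≤ D_φ·m·φ(n). -/
open MeasureTheory Filter

/-!
Let `2 ^ k` be the least power of two greater than `m`. Halving `m` repeatedly decomposes
`γ (m * n)` into `m` copies of `γ n` along a binary tree. At depth `i` there are at most `2 ^ i`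
splittings, each of an index at most `2 ^ (k - i) * n` and hence of cost at most
`φ (2 ^ (k - i) * n)`. The total cost is therefore at most `2 ^ k ≤ 2 * m` times the dyadic sum of
`φ (2 ^ j * n) / 2 ^ j` over `1 ≤ j ≤ k`, and since `φ` is monotone, that sum is bounded by a
multiple of `n` times the tail integral of `φ t / t ^ 2`.
-/

open Set

/-- A pseudometric without symmetry on a not necessarily commutative additive monoid, for which
addition is nonexpansive. The latter is encoded as joint subadditivity in the two arguments, so that
no left-right convention is needed. It isolates what the halving argument requires of a metric
Abelian monoid. -/
structure IsAddHemimetric {Γ : Type*} [AddMonoid Γ] (d : Γ → Γ → ℝ) : Prop where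
  self_eq_zero : ∀ x, d x x = 0
  triangle : ∀ x y z, d x z ≤ d x y + d y z
  add_add_le : ∀ a b a' b', d (a + b) (a' + b') ≤ d a a' + d b b'

theorem IsMetricAbelianMonoid.isAddHemimetric {Γ : Type*} [AddCommMonoid Γ] {d : Γ → Γ → ℝ}
    (h : IsMetricAbelianMonoid d) : IsAddHemimetric d where
  self_eq_zero := h.1.1
  triangle := h.1.2.2
  add_add_le a b a' b' := calc
    d (a + b) (a' + b') ≤ d (a + b) (a' + b) + d (a' + b) (a' + b') := h.1.2.2 _ _ _
    _ = d (b + a) (b + a') + d (a' + b) (a' + b') := by rw [add_comm a, add_comm a' b]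
    _ ≤ d a a' + d b b' := add_le_add (h.2 b a a') (h.2 a' b b')

theorem IsAddHemimetric.dist_nsmul_le_dyadic_sum {Γ : Type*} [AddMonoid Γ] {d : Γ → Γ → ℝ}
    (h : IsAddHemimetric d) {f : ℕ → Γ} {δ : ℕ → ℝ} (hδ : ∀ k, 0 ≤ δ k)
    (hf : ∀ k a b, 1 ≤ a → 1 ≤ b → a + b ≤ 2 ^ (k + 1) → d (f (a + b)) (f a + f b) ≤ δ k)
    (k m : ℕ) (hm : 1 ≤ m) (hmk : m ≤ 2 ^ k) :
    d (f m) (m • f 1) ≤ 2 ^ k * ∑ j ∈ Finset.range k, δ j / 2 ^ (j + 1) := by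
  induction k generalizing m with
  | zero =>
    obtain rfl : m = 1 := le_antisymm hmk hm
    simp [h.self_eq_zero]
  | succ k ih =>
    obtain rfl | hm1 := hm.eq_or_lt
    · rw [one_nsmul, h.self_eq_zero]
      exact mul_nonneg (by positivity)
        (Finset.sum_nonneg fun j _ => div_nonneg (hδ j) (by positivity))
    obtain ⟨a, b, rfl, ha, hak, hb, hbk⟩ :
        ∃ a b, m = a + b ∧ 1 ≤ a ∧ a ≤ 2 ^ k ∧ 1 ≤ b ∧ b ≤ 2 ^ k :=
      ⟨m / 2, m - m / 2, by omega, by omega, by omega, by omega, by omega⟩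
    set S := ∑ j ∈ Finset.range k, δ j / 2 ^ (j + 1) with hS
    calc d (f (a + b)) ((a + b) • f 1)
      _ ≤ d (f (a + b)) (f a + f b) + d (f a + f b) (a • f 1 + b • f 1) := by
        rw [add_nsmul]
        exact h.triangle _ _ _
      _ ≤ δ k + (d (f a) (a • f 1) + d (f b) (b • f 1)) :=
        add_le_add (hf k a b ha hb hmk) (h.add_add_le _ _ _ _)
      _ ≤ δ k + (2 ^ k * S + 2 ^ k * S) := by
        gcongr
        exacts [ih a ha hak, ih b hb hbk]
      _ = 2 ^ (k + 1) * ∑ j ∈ Finset.range (k + 1), δ j / 2 ^ (j + 1) := by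
        rw [Finset.sum_range_succ, ← hS]
        field_simp
        ring

theorem mul_inv_sub_inv_le_integral_div_sq {φ : ℝ → ℝ} {a b : ℝ} (ha : 0 < a)
    (hab : a ≤ b) (hφ : MonotoneOn φ (Icc a b)) :
    φ a * (a⁻¹ - b⁻¹) ≤ ∫ t in a..b, φ t / t ^ 2 := by
  have hzero : (0 : ℝ) ∉ uIcc a b := notMem_uIcc_of_lt ha (ha.trans_le hab)
  have hcont : ContinuousOn (fun t : ℝ => (t ^ 2)⁻¹) (uIcc a b) :=
    (continuousOn_pow 2).inv₀ fun t ht => pow_ne_zero 2 (ne_of_mem_of_not_mem ht hzero)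
  have hint : IntervalIntegrable (fun t => φ t / t ^ 2) volume a b := by
    rw [← uIcc_of_le hab] at hφ
    simpa only [div_eq_mul_inv] using hφ.intervalIntegrable.mul_continuousOn hcont
  have hinv : ∫ t in a..b, (t ^ 2)⁻¹ = a⁻¹ - b⁻¹ := calc
    ∫ t in a..b, (t ^ 2)⁻¹ = ∫ t in a..b, t ^ (-2 : ℤ) := by norm_cast
    _ = (b ^ (-2 + 1 : ℤ) - a ^ (-2 + 1 : ℤ)) / ((-2 : ℤ) + 1) :=
      integral_zpow (Or.inr ⟨by norm_num, hzero⟩)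
    _ = a⁻¹ - b⁻¹ := by norm_num [div_neg]
  calc φ a * (a⁻¹ - b⁻¹) = ∫ t in a..b, φ a / t ^ 2 := by
        simp only [div_eq_mul_inv, intervalIntegral.integral_const_mul, hinv]
    _ ≤ ∫ t in a..b, φ t / t ^ 2 := by
        refine intervalIntegral.integral_mono_on hab ?_ hint fun t ht => ?_
        · simpa only [div_eq_mul_inv] using hcont.intervalIntegrable.const_mul (φ a)
        · gcongr
          exact hφ (left_mem_Icc.2 hab) ht ht.1

theorem sum_dyadic_le_integral_Ioi_div_sq {φ : ℝ → ℝ} {s : ℝ} (hs : 0 < s) (hφs : 0 ≤ φ s)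
    (hφ : MonotoneOn φ (Ici s)) (hint : IntegrableOn (fun t => φ t / t ^ 2) (Ioi s)) (k : ℕ) :
    ∑ j ∈ Finset.range k, φ (2 ^ j * s) / 2 ^ j ≤ 2 * s * ∫ t in Ioi s, φ t / t ^ 2 := by
  have hle_pow (j : ℕ) : s ≤ 2 ^ j * s := le_mul_of_one_le_left hs.le (one_le_pow₀ one_le_two)
  have hle_succ (j : ℕ) : 2 ^ j * s ≤ 2 ^ (j + 1) * s := by gcongr <;> simp
  have hsub (j : ℕ) : Icc (2 ^ j * s) (2 ^ (j + 1) * s) ⊆ Ici s :=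
    Icc_subset_Ici_self.trans (Ici_subset_Ici.2 (hle_pow j))
  have hterm (j : ℕ) : φ (2 ^ j * s) / 2 ^ j ≤
      2 * s * ∫ t in (2 ^ j * s)..(2 ^ (j + 1) * s), φ t / t ^ 2 := by
    calc φ (2 ^ j * s) / 2 ^ j
      _ = 2 * s * (φ (2 ^ j * s) * ((2 ^ j * s)⁻¹ - (2 ^ (j + 1) * s)⁻¹)) := by
        field_simp
        ring
      _ ≤ _ := by
        gcongr
        exact mul_inv_sub_inv_le_integral_div_sq (by positivity) (hle_succ j)
          (hφ.mono (hsub j))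
  have hadj (j : ℕ) : IntervalIntegrable (fun t => φ t / t ^ 2) volume
      (2 ^ j * s) (2 ^ (j + 1) * s) :=
    (intervalIntegrable_iff_integrableOn_Ioc_of_le (hle_succ j)).2 <|
      hint.mono_set fun _ ht => (hle_pow j).trans_lt ht.1
  calc ∑ j ∈ Finset.range k, φ (2 ^ j * s) / 2 ^ j
    _ ≤ ∑ j ∈ Finset.range k, 2 * s * ∫ t in (2 ^ j * s)..(2 ^ (j + 1) * s), φ t / t ^ 2 :=
      Finset.sum_le_sum fun j _ => hterm j
    _ = 2 * s * ∫ t in Ioc s (2 ^ k * s), φ t / t ^ 2 := by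
      rw [← Finset.mul_sum, intervalIntegral.sum_integral_adjacent_intervals fun j _ => hadj j,
        pow_zero, one_mul, intervalIntegral.integral_of_le (hle_pow k)]
    _ ≤ 2 * s * ∫ t in Ioi s, φ t / t ^ 2 := by
      refine mul_le_mul_of_nonneg_left ?_ (by positivity)
      refine setIntegral_mono_set hint ?_ Ioc_subset_Ioi_self.eventuallyLE
      filter_upwards [ae_restrict_mem measurableSet_Ioi] with t (ht : s < t)
      exact div_nonneg (hφs.trans (hφ self_mem_Ici ht.le ht.le)) (sq_nonneg t)

theorem IsAddHemimetric.dist_mul_nsmul_le_integral {Γ : Type*} [AddMonoid Γ] {d : Γ → Γ → ℝ}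
    (h : IsAddHemimetric d) {φ : ℝ → ℝ} {γ : ℕ → Γ} {m n : ℕ} (hm : 1 ≤ m) (hn : 1 ≤ n)
    (hφn : 0 ≤ φ (2 * n)) (hφ : MonotoneOn φ (Ici (2 * n)))
    (hint : IntegrableOn (fun t => φ t / t ^ 2) (Ioi (2 * n)))
    (hγ : ∀ a b : ℕ, 1 ≤ a → 1 ≤ b → d (γ (a + b)) (γ a + γ b) ≤ φ (a + b : ℕ)) :
    d (γ (m * n)) (m • γ n) ≤ 4 * m * n * ∫ t in Ioi (2 * n : ℝ), φ t / t ^ 2 := by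
  have h2n : (0 : ℝ) < 2 * n := by exact_mod_cast Nat.mul_pos two_pos hn
  have hmem (k : ℕ) : (2 ^ k * (2 * n) : ℝ) ∈ Ici (2 * n : ℝ) :=
    mem_Ici.2 (le_mul_of_one_le_left h2n.le (one_le_pow₀ one_le_two))
  have hφ_nonneg (k : ℕ) : 0 ≤ φ (2 ^ k * (2 * n)) := hφn.trans (hφ self_mem_Ici (hmem k) (hmem k))
  have hdefect (k a b : ℕ) (ha : 1 ≤ a) (hb : 1 ≤ b) (hab : a + b ≤ 2 ^ (k + 1)) :
      d (γ ((a + b) * n)) (γ (a * n) + γ (b * n)) ≤ φ (2 ^ k * (2 * n)) := by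
    rw [add_mul]
    refine (hγ _ _ (Nat.mul_pos ha hn) (Nat.mul_pos hb hn)).trans
      (hφ (mem_Ici.2 ?_) (hmem k) ?_)
    · have : 2 * n ≤ a * n + b * n := by nlinarith
      exact_mod_cast this
    · have : a * n + b * n ≤ 2 ^ k * (2 * n) := by
        rw [← add_mul, ← mul_assoc, ← pow_succ]
        gcongr
      exact_mod_cast this
  obtain ⟨k, hmk, hkm⟩ : ∃ k : ℕ, m ≤ 2 ^ k ∧ 2 ^ k ≤ 2 * m := by
    obtain ⟨l, hlm, hml⟩ := exists_nat_pow_near hm one_lt_two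
    exact ⟨l + 1, hml.le, by omega⟩
  have hsum := sum_dyadic_le_integral_Ioi_div_sq h2n hφn hφ hint k
  calc d (γ (m * n)) (m • γ n)
    _ ≤ 2 ^ k * ∑ j ∈ Finset.range k, φ (2 ^ j * (2 * n)) / 2 ^ (j + 1) := by
      simpa only [one_mul] using
        h.dist_nsmul_le_dyadic_sum (f := fun a => γ (a * n)) hφ_nonneg hdefect k m hm hmk
    _ = 2 ^ k * ((∑ j ∈ Finset.range k, φ (2 ^ j * (2 * n)) / 2 ^ j) / 2) := by
      simp only [pow_succ, ← div_div, Finset.sum_div]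
    _ ≤ (2 * m : ℕ) * ((2 * (2 * n) * ∫ t in Ioi (2 * n : ℝ), φ t / t ^ 2) / 2) := by
      have := Finset.sum_nonneg fun j (_ : j ∈ Finset.range k) =>
        div_nonneg (hφ_nonneg j) (by positivity : (0 : ℝ) ≤ 2 ^ j)
      gcongr
      exact_mod_cast hkm
    _ = 4 * m * n * ∫ t in Ioi (2 * n : ℝ), φ t / t ^ 2 := by
      push_cast
      ring

theorem quasilinear_quasihomogeneous_tail_general {Γ : Type*} [AddMonoid Γ] {d : Γ → Γ → ℝ}
    (h : IsAddHemimetric d) {φ : ℝ → ℝ} {D : ℝ} (hφ : AdmissibleWith φ D) {γ : ℕ → Γ}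
    (hγ : ∀ a b : ℕ, 1 ≤ a → 1 ≤ b → d (γ (a + b)) (γ a + γ b) ≤ φ (a + b : ℕ))
    {m n : ℕ} (hm : 1 ≤ m) (hn : 1 ≤ n) :
    d (γ (m * n)) (m • γ n) ≤ 8 * m * n * ∫ t in Ioi (n : ℝ), φ t / t ^ 2 ∧
      8 * m * n * (∫ t in Ioi (n : ℝ), φ t / t ^ 2) ≤ D * m * φ n := by
  obtain ⟨hnonneg, hmono, -, hint, htail⟩ := hφ
  have hn1 : (1 : ℝ) ≤ n := by exact_mod_cast hn
  have hn2 : (n : ℝ) ≤ 2 * n := by linarith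
  have hpos : ∀ t ∈ Ioi (n : ℝ), 0 ≤ φ t / t ^ 2 := fun t ht =>
    div_nonneg (hnonneg t (hn1.trans (le_of_lt ht))) (sq_nonneg t)
  have htail_nonneg : 0 ≤ ∫ t in Ioi (n : ℝ), φ t / t ^ 2 :=
    setIntegral_nonneg measurableSet_Ioi hpos
  have htail_anti : ∫ t in Ioi (2 * n : ℝ), φ t / t ^ 2 ≤ ∫ t in Ioi (n : ℝ), φ t / t ^ 2 :=
    setIntegral_mono_set (hint n hn1) (ae_restrict_of_forall_mem measurableSet_Ioi hpos)
      (Ioi_subset_Ioi hn2).eventuallyLE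
  constructor
  · calc d (γ (m * n)) (m • γ n)
      _ ≤ 4 * m * n * ∫ t in Ioi (2 * n : ℝ), φ t / t ^ 2 :=
        h.dist_mul_nsmul_le_integral hm hn (hnonneg _ (hn1.trans hn2))
          (hmono.mono (Ici_subset_Ici.2 (hn1.trans hn2))) (hint _ (hn1.trans hn2)) hγ
      _ ≤ 4 * m * n * ∫ t in Ioi (n : ℝ), φ t / t ^ 2 := by gcongr
      _ ≤ 8 * m * n * ∫ t in Ioi (n : ℝ), φ t / t ^ 2 := by
        gcongr
        norm_num
  · have := mul_le_mul_of_nonneg_left (htail n hn1) (by positivity : (0 : ℝ) ≤ 8 * m)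
    linarith

/-- Quasi-homogeneity, integrated version:
`d (γ (m*n)) (m • γ n) ≤ 8 m n ∫_n^∞ φ(t)/t² dt ≤ D_φ · m · φ(n)`. -/
theorem quasilinear_quasihomogeneous_tail {Γ : Type*} [AddCommMonoid Γ]
    (d : Γ → Γ → ℝ) (h : IsMetricAbelianMonoid d)
    (φ : ℝ → ℝ) (D : ℝ) (hφ : AdmissibleWith φ D)
    (γ : ℕ → Γ) (hγ : QuasiLinear d φ γ)
    (m n : ℕ) (hm : 1 ≤ m) (hn : 1 ≤ n) :
    d (γ (m * n)) (m • γ n) ≤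
        8 * (m : ℝ) * (n : ℝ) * ∫ t in Set.Ioi (n : ℝ), φ t / t ^ 2 ∧
      8 * (m : ℝ) * (n : ℝ) * (∫ t in Set.Ioi (n : ℝ), φ t / t ^ 2) ≤
        D * (m : ℝ) * φ (n : ℝ) :=
  quasilinear_quasihomogeneous_tail_general h.isAddHemimetric hφ hγ.2 hm hn
end

section
/- Let (Γ,+,d) be a metric Abelian monoid and define the induced homogeneous pseudometric 𝛿(x,y) := lim_{k→∞} (1/k)·d(k•x, k•y) on Γ. Let φ be a positive admissible function. Then for any two sequences γ̄₁, γ̄₂ that are quasi-linear with respect to d with defects bounded by multiples of φ, the asymptotic distances computed with d and with 𝛿 coincide: lim_{n→∞} (1/n)·d(γ₁(n), γ₂(n)) = lim_{n→∞} (1/n)·𝛿(γ₁(n), γ₂(n)). -/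
open MeasureTheory Filter

/-!
If `f (m + n) ≤ f m + f n + ψ (m + n)`, halving `k` repeatedly splits it into `k` ones, and the at
most `2 * k / 2 ^ i` pieces of size about `2 ^ i` each contribute an error at most `ψ (2 ^ i)`. So
`f k ≤ k * (f 1 + 2 * ∑ i, ψ (2 ^ i) / 2 ^ i)`. For `k ↦ f (n * k)` the error term in this bound is
`2 * n` times a tail of the convergent series, which tends to zero as `n → ∞`; hence `f n / n`
converges (de Bruijn–Erdős). This applies to `n ↦ d (γ₁ n) (γ₂ n)`. Applied to
`k ↦ d (γ (n * k)) (k • γ n)`, which vanishes at `k = 1`, the bound shows that `γ (n * k)` and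
`k • γ n` are at distance at most `o(n) * k`, so that `d (k • γ₁ n) (k • γ₂ n) / (n * k)` and
`d (γ₁ (n * k)) (γ₂ (n * k)) / (n * k)` differ by `o(1)`, uniformly in `k`. Now let `k → ∞`.
-/

theorem exists_tendsto_of_forall_eventually_lt {ι : Type*} {l : Filter ι} {v w : ι → ℝ}
    (hv : BddBelow (Set.range v)) (hwv : Tendsto (fun n => w n - v n) l (nhds 0))
    (h : ∀ᶠ n in l, ∀ x, w n < x → ∀ᶠ m in l, v m < x) :
    ∃ L, Tendsto v l (nhds L) := by
  rcases l.eq_or_neBot with rfl | _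
  · exact ⟨0, tendsto_bot⟩
  refine tendsto_of_no_upcrossings dense_univ ?_ ?_ hv.isBoundedUnder_of_range
  · rintro a - b - hab ⟨hlow, hhigh⟩
    have hgap : ∀ᶠ n in l, w n - v n < b - a := hwv.eventually (gt_mem_nhds (sub_pos.2 hab))
    obtain ⟨n, hna, hgap_n, hn⟩ := (hlow.and_eventually (hgap.and h)).exists
    exact hhigh ((hn b (by linarith)).mono fun m hm => hm.not_gt)
  · obtain ⟨n, hn⟩ := h.exists
    exact isBoundedUnder_of_eventually_le ((hn (w n + 1) (by linarith)).mono fun m hm => hm.le)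

/-- Defect sequences for which approximate additivity forces linear growth: nonnegative,
nondecreasing, and with `∑ ψ (2 ^ i) / 2 ^ i < ∞`, the discrete counterpart of `∫ φ t / t ^ 2 < ∞`.
Defects are only evaluated at positive indices, so `ψ 0` is left unconstrained. -/
structure IsSummableDefect (ψ : ℕ → ℝ) : Prop where
  nonneg : ∀ n, 1 ≤ n → 0 ≤ ψ n
  monotoneOn : MonotoneOn ψ (Set.Ici 1)
  summable : Summable fun i : ℕ => ψ (2 ^ i) / 2 ^ i

/-- The discrete counterpart of `∫ t in Ioi n, ψ t / t ^ 2`, sampled along `n, 2 * n, 4 * n, …`; it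
bounds the accumulated error per unit length of a sequence with defect `ψ` beyond scale `n`. -/
noncomputable def dyadicTail (ψ : ℕ → ℝ) (n : ℕ) : ℝ :=
  ∑' i : ℕ, ψ (2 ^ i * n) / ((2 ^ i * n : ℕ) : ℝ)

theorem dyadicTail_comp_mul_one (ψ : ℕ → ℝ) {n : ℕ} (hn : 1 ≤ n) :
    dyadicTail (fun k => ψ (n * k)) 1 = n * dyadicTail ψ n := by
  rw [dyadicTail, dyadicTail, ← tsum_mul_left]
  refine tsum_congr fun i => ?_
  have hn₀ : (n : ℝ) ≠ 0 := by positivity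
  rw [mul_one, mul_comm n]
  push_cast
  field_simp

namespace IsSummableDefect

variable {ψ : ℕ → ℝ}

theorem dyadicTail_term_nonneg (hψ : IsSummableDefect ψ) {n : ℕ} (hn : 1 ≤ n) (i : ℕ) :
    0 ≤ ψ (2 ^ i * n) / ((2 ^ i * n : ℕ) : ℝ) :=
  div_nonneg (hψ.nonneg _ (Nat.mul_pos (by positivity) hn)) (Nat.cast_nonneg _)

theorem dyadicTail_term_le (hψ : IsSummableDefect ψ) {n j : ℕ} (hjn : 2 ^ j ≤ n)
    (hnj : n ≤ 2 ^ (j + 1)) (i : ℕ) :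
    ψ (2 ^ i * n) / ((2 ^ i * n : ℕ) : ℝ) ≤ 2 * (ψ (2 ^ (i + (j + 1))) / 2 ^ (i + (j + 1))) := by
  have hn : 1 ≤ n := Nat.one_le_two_pow.trans hjn
  have hle : 2 ^ i * n ≤ 2 ^ (i + (j + 1)) := by rw [pow_add]; gcongr
  have hψle : ψ (2 ^ i * n) ≤ ψ (2 ^ (i + (j + 1))) :=
    hψ.monotoneOn (Nat.mul_pos (by positivity) hn) Nat.one_le_two_pow hle
  have hden : (2 : ℝ) ^ (i + j) ≤ ((2 ^ i * n : ℕ) : ℝ) := by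
    rw [pow_add]
    exact_mod_cast Nat.mul_le_mul_left (2 ^ i) hjn
  calc ψ (2 ^ i * n) / ((2 ^ i * n : ℕ) : ℝ)
      ≤ ψ (2 ^ (i + (j + 1))) / 2 ^ (i + j) :=
        div_le_div₀ (hψ.nonneg _ Nat.one_le_two_pow) hψle (by positivity) hden
    _ = 2 * (ψ (2 ^ (i + (j + 1))) / 2 ^ (i + (j + 1))) := by
        rw [← add_assoc, pow_succ (2 : ℝ)]
        field_simp

theorem summable_dyadicTail (hψ : IsSummableDefect ψ) {n : ℕ} (hn : 1 ≤ n) :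
    Summable fun i : ℕ => ψ (2 ^ i * n) / ((2 ^ i * n : ℕ) : ℝ) :=
  .of_nonneg_of_le (hψ.dyadicTail_term_nonneg hn)
    (hψ.dyadicTail_term_le (Nat.pow_log_le_self 2 (by omega))
      (Nat.lt_pow_succ_log_self one_lt_two n).le)
    (((summable_nat_add_iff (Nat.log 2 n + 1)).2 hψ.summable).mul_left 2)

theorem dyadicTail_nonneg (hψ : IsSummableDefect ψ) {n : ℕ} (hn : 1 ≤ n) : 0 ≤ dyadicTail ψ n :=
  tsum_nonneg (hψ.dyadicTail_term_nonneg hn)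

theorem div_le_dyadicTail (hψ : IsSummableDefect ψ) {n : ℕ} (hn : 1 ≤ n) :
    ψ n / n ≤ dyadicTail ψ n := by
  simpa [dyadicTail] using
    (hψ.summable_dyadicTail hn).le_tsum 0 fun i _ => hψ.dyadicTail_term_nonneg hn i

theorem dyadicTail_le (hψ : IsSummableDefect ψ) {n : ℕ} (hn : 1 ≤ n) :
    dyadicTail ψ n ≤
      2 * ∑' i, ψ (2 ^ (i + (Nat.log 2 n + 1))) / 2 ^ (i + (Nat.log 2 n + 1)) := by
  rw [← tsum_mul_left]
  exact (hψ.summable_dyadicTail hn).tsum_le_tsum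
    (hψ.dyadicTail_term_le (Nat.pow_log_le_self 2 (by omega))
      (Nat.lt_pow_succ_log_self one_lt_two n).le)
    (((summable_nat_add_iff (Nat.log 2 n + 1)).2 hψ.summable).mul_left 2)

theorem tendsto_dyadicTail (hψ : IsSummableDefect ψ) :
    Tendsto (dyadicTail ψ) atTop (nhds 0) := by
  have hlog : Tendsto (fun n => Nat.log 2 n + 1) atTop atTop :=
    (tendsto_add_atTop_nat 1).comp <| tendsto_atTop_atTop_of_monotone Nat.log_monotone
      fun b => ⟨2 ^ b, (Nat.log_pow one_lt_two b).ge⟩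
  have htail := ((tendsto_sum_nat_add fun i => ψ (2 ^ i) / 2 ^ i).comp hlog).const_mul 2
  rw [mul_zero] at htail
  refine squeeze_zero' ?_ ?_ htail
  · filter_upwards [eventually_ge_atTop 1] with n hn using hψ.dyadicTail_nonneg hn
  · filter_upwards [eventually_ge_atTop 1] with n hn using hψ.dyadicTail_le hn

theorem tendsto_div (hψ : IsSummableDefect ψ) :
    Tendsto (fun n : ℕ => ψ n / n) atTop (nhds 0) := by
  refine squeeze_zero' ?_ ?_ hψ.tendsto_dyadicTail
  · filter_upwards [eventually_ge_atTop 1] with n hn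
    exact div_nonneg (hψ.nonneg n hn) n.cast_nonneg
  · filter_upwards [eventually_ge_atTop 1] with n hn using hψ.div_le_dyadicTail hn

theorem add {ψ₁ ψ₂ : ℕ → ℝ} (h₁ : IsSummableDefect ψ₁) (h₂ : IsSummableDefect ψ₂) :
    IsSummableDefect fun n => ψ₁ n + ψ₂ n where
  nonneg n hn := add_nonneg (h₁.nonneg n hn) (h₂.nonneg n hn)
  monotoneOn := h₁.monotoneOn.add h₂.monotoneOn
  summable := by simpa only [add_div] using h₁.summable.add h₂.summable

theorem const_mul (hψ : IsSummableDefect ψ) {C : ℝ} (hC : 0 ≤ C) :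
    IsSummableDefect fun n => C * ψ n where
  nonneg n hn := mul_nonneg hC (hψ.nonneg n hn)
  monotoneOn := fun _ hm _ hn hmn => mul_le_mul_of_nonneg_left (hψ.monotoneOn hm hn hmn) hC
  summable := by simpa only [mul_div_assoc] using hψ.summable.mul_left C

theorem comp_mul_left (hψ : IsSummableDefect ψ) {n : ℕ} (hn : 1 ≤ n) :
    IsSummableDefect fun k => ψ (n * k) where
  nonneg k hk := hψ.nonneg _ (Nat.mul_pos hn hk)
  monotoneOn _ hk _ hl hkl :=
    hψ.monotoneOn (Nat.mul_pos hn hk) (Nat.mul_pos hn hl) (Nat.mul_le_mul_left n hkl)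
  summable := by
    refine ((hψ.summable_dyadicTail hn).mul_left (n : ℝ)).congr fun i => ?_
    have hn₀ : (n : ℝ) ≠ 0 := by positivity
    rw [mul_comm n]
    push_cast
    field_simp

end IsSummableDefect

/-- Subadditivity of a sequence on the positive integers up to the defect `ψ`, which, as in
`QuasiLinear`, is evaluated at the sum of the two arguments. -/
def AlmostSubadditive (ψ f : ℕ → ℝ) : Prop :=
  ∀ m n, 1 ≤ m → 1 ≤ n → f (m + n) ≤ f m + f n + ψ (m + n)

namespace AlmostSubadditive

variable {ψ f : ℕ → ℝ}

theorem comp_mul_left (hf : AlmostSubadditive ψ f) {n : ℕ} (hn : 1 ≤ n) :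
    AlmostSubadditive (fun k => ψ (n * k)) fun k => f (n * k) := fun k l hk hl => by
  simpa only [mul_add] using hf (n * k) (n * l) (Nat.mul_pos hn hk) (Nat.mul_pos hn hl)

theorem apply_le_mul_sum_range (hf : AlmostSubadditive ψ f) (h₀ : ∀ n, 1 ≤ n → 0 ≤ ψ n)
    (hmono : MonotoneOn ψ (Set.Ici 1)) (j : ℕ) :
    ∀ k : ℕ, 2 ^ j ≤ k → k ≤ 2 ^ (j + 1) →
      f k ≤ k * (f 1 + 2 * ∑ i ∈ Finset.range (j + 2), ψ (2 ^ i) / 2 ^ i) := by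
  induction j with
  | zero =>
    intro k hk₁ hk₂
    have h₁ : 0 ≤ ψ 1 := h₀ 1 le_rfl
    have h₂ : 0 ≤ ψ 2 := h₀ 2 one_le_two
    have hsum : ∑ i ∈ Finset.range (0 + 2), ψ (2 ^ i) / 2 ^ i = ψ 1 + ψ 2 / 2 := by
      simp [Finset.sum_range_succ]
    rw [hsum]
    obtain rfl | rfl : k = 1 ∨ k = 2 := by omega
    · rw [Nat.cast_one]
      linarith
    · rw [Nat.cast_two]
      linarith [hf 1 1 le_rfl le_rfl]
  | succ j ih =>
    intro k hk₁ hk₂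
    obtain ⟨a, b, rfl, ha₁, ha₂, hb₁, hb₂⟩ : ∃ a b, k = a + b ∧
        2 ^ j ≤ a ∧ a ≤ 2 ^ (j + 1) ∧ 2 ^ j ≤ b ∧ b ≤ 2 ^ (j + 1) :=
      ⟨k / 2, k - k / 2, by omega, by omega, by omega, by omega, by omega⟩
    have ha : 1 ≤ a := Nat.one_le_two_pow.trans ha₁
    have hb : 1 ≤ b := Nat.one_le_two_pow.trans hb₁
    have hdefect : ψ (a + b) ≤ (a + b) * (2 * (ψ (2 ^ (j + 2)) / 2 ^ (j + 2))) := calc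
      ψ (a + b) ≤ ψ (2 ^ (j + 2)) :=
        hmono (ha.trans (Nat.le_add_right a b)) Nat.one_le_two_pow hk₂
      _ = 2 ^ (j + 1) * (2 * (ψ (2 ^ (j + 2)) / 2 ^ (j + 2))) := by
        rw [pow_succ (2 : ℝ) (j + 1)]
        field_simp
      _ ≤ (a + b) * (2 * (ψ (2 ^ (j + 2)) / 2 ^ (j + 2))) := by
        have := h₀ (2 ^ (j + 2)) Nat.one_le_two_pow
        gcongr
        exact_mod_cast hk₁
    rw [Finset.sum_range_succ]
    push_cast
    linarith [hf a b ha hb, ih a ha₁ ha₂, ih b hb₁ hb₂]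

theorem apply_le_mul_dyadicTail_one (hf : AlmostSubadditive ψ f) (hψ : IsSummableDefect ψ) {k : ℕ}
    (hk : 1 ≤ k) : f k ≤ k * (f 1 + 2 * dyadicTail ψ 1) := by
  refine (hf.apply_le_mul_sum_range hψ.nonneg hψ.monotoneOn (Nat.log 2 k) k
    (Nat.pow_log_le_self 2 (by omega)) (Nat.lt_pow_succ_log_self one_lt_two k).le).trans ?_
  gcongr
  simpa [dyadicTail] using (hψ.summable_dyadicTail le_rfl).sum_le_tsum
    (Finset.range (Nat.log 2 k + 2)) fun i _ => hψ.dyadicTail_term_nonneg le_rfl i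

theorem apply_mul_le (hf : AlmostSubadditive ψ f) (hψ : IsSummableDefect ψ) {n k : ℕ}
    (hn : 1 ≤ n) (hk : 1 ≤ k) : f (n * k) ≤ k * (f n + 2 * (n * dyadicTail ψ n)) := by
  simpa only [mul_one, dyadicTail_comp_mul_one ψ hn] using
    (hf.comp_mul_left hn).apply_le_mul_dyadicTail_one (hψ.comp_mul_left hn) hk

theorem exists_apply_le_affine (hf : AlmostSubadditive ψ f) (hψ : IsSummableDefect ψ) {n : ℕ}
    (hn : 1 ≤ n) :
    ∃ M : ℝ, ∀ p, n ≤ p → f p ≤ (f n / n + 2 * dyadicTail ψ n) * p + M + ψ p := by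
  set c := f n / n + 2 * dyadicTail ψ n with hc
  obtain ⟨M, hM⟩ := ((Set.finite_Iio n).image fun r => |f r| - c * r).exists_le
  refine ⟨M, fun p hp => ?_⟩
  set q := p / n
  set r := p % n
  have hpqr : n * q + r = p := Nat.div_add_mod p n
  have hq : 1 ≤ q := Nat.div_pos hp hn
  have hsplit : f p ≤ f (n * q) + |f r| + ψ p := by
    rcases r.eq_zero_or_pos with hr | hr
    · rw [← hpqr, hr, add_zero]
      linarith [hψ.nonneg _ (Nat.mul_pos hn hq), abs_nonneg (f 0)]
    · have hadd := hf (n * q) r (Nat.mul_pos hn hq) hr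
      rw [hpqr] at hadd
      linarith [le_abs_self (f r)]
  have hmul : f (n * q) ≤ c * (n * q) := by
    refine (hf.apply_mul_le hψ hn hq).trans_eq ?_
    have hn₀ : (n : ℝ) ≠ 0 := by positivity
    rw [hc]
    field_simp
  have hrem : |f r| - c * r ≤ M := hM _ ⟨r, Nat.mod_lt p hn, rfl⟩
  have hcast : (n * q + r : ℝ) = p := by exact_mod_cast hpqr
  rw [← hcast, mul_add]
  linarith

theorem eventually_div_lt (hf : AlmostSubadditive ψ f) (hψ : IsSummableDefect ψ) {n : ℕ}
    (hn : 1 ≤ n) {x : ℝ} (hx : f n / n + 2 * dyadicTail ψ n < x) :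
    ∀ᶠ p : ℕ in atTop, f p / p < x := by
  obtain ⟨M, hM⟩ := hf.exists_apply_le_affine hψ hn
  have hlim : Tendsto (fun p : ℕ => f n / n + 2 * dyadicTail ψ n + M / p + ψ p / p) atTop
      (nhds (f n / n + 2 * dyadicTail ψ n)) := by
    simpa using ((tendsto_const_div_atTop_nhds_zero_nat M).const_add _).add hψ.tendsto_div
  filter_upwards [hlim.eventually (gt_mem_nhds hx), eventually_ge_atTop n] with p hpx hnp
  have hp : (0 : ℝ) < p := by exact_mod_cast hn.trans hnp
  refine lt_of_le_of_lt ?_ hpx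
  rw [div_le_iff₀ hp, add_mul, add_mul, div_mul_cancel₀ _ hp.ne', div_mul_cancel₀ _ hp.ne']
  exact hM p hnp

theorem exists_tendsto_div (hf : AlmostSubadditive ψ f) (hψ : IsSummableDefect ψ)
    (hbdd : BddBelow (Set.range fun n : ℕ => f n / n)) :
    ∃ L, Tendsto (fun n : ℕ => f n / n) atTop (nhds L) := by
  refine exists_tendsto_of_forall_eventually_lt (w := fun n => f n / n + 2 * dyadicTail ψ n)
    hbdd (by simpa using hψ.tendsto_dyadicTail.const_mul 2) ?_
  filter_upwards [eventually_ge_atTop 1] with n hn x hx using hf.eventually_div_lt hψ hn hx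

end AlmostSubadditive

section AdmissibleFunctions

variable {φ : ℝ → ℝ}

theorem div_le_four_mul_setIntegral_Ioc_div_sq (h₀ : ∀ t, 1 ≤ t → 0 ≤ φ t)
    (hmono : MonotoneOn φ (Set.Ici 1)) {s : ℝ} (hs : 1 ≤ s)
    (hint : IntegrableOn (fun t => φ t / t ^ 2) (Set.Ioc s (2 * s))) :
    φ s / s ≤ 4 * ∫ t in Set.Ioc s (2 * s), φ t / t ^ 2 := by
  have hle : ∀ t ∈ Set.Ioc s (2 * s), φ s / (2 * s) ^ 2 ≤ φ t / t ^ 2 := fun t ⟨hst, hts⟩ => by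
    have ht : 1 ≤ t := hs.trans hst.le
    exact div_le_div₀ (h₀ t ht) (hmono hs ht hst.le) (by positivity) (by gcongr)
  have hconst := setIntegral_ge_of_const_le_real measurableSet_Ioc (by simp) hle hint
  rw [Real.volume_real_Ioc_of_le (by linarith)] at hconst
  calc φ s / s = 4 * (φ s / (2 * s) ^ 2 * (2 * s - s)) := by
        have : s ≠ 0 := by positivity
        field_simp
        ring
    _ ≤ _ := by gcongr

theorem isSummableDefect_of_integrableOn (h₀ : ∀ t, 1 ≤ t → 0 ≤ φ t)
    (hmono : MonotoneOn φ (Set.Ici 1))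
    (hint : IntegrableOn (fun t => φ t / t ^ 2) (Set.Ioi 1)) :
    IsSummableDefect fun n => φ n where
  nonneg n hn := h₀ n (by exact_mod_cast hn)
  monotoneOn m hm n hn hmn :=
    hmono (Set.mem_Ici.2 (Nat.one_le_cast.2 hm)) (Set.mem_Ici.2 (Nat.one_le_cast.2 hn))
      (Nat.cast_le.2 hmn)
  summable := by
    set I : ℕ → Set ℝ := fun i => Set.Ioc (2 ^ i) (2 ^ (i + 1))
    have hsub : ⋃ i, I i ⊆ Set.Ioi 1 := Set.iUnion_subset fun i t ht =>
      (one_le_pow₀ one_le_two).trans_lt ht.1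
    have hdisj : Pairwise (Function.onFun Disjoint I) :=
      (pow_right_mono₀ (one_le_two (α := ℝ))).pairwise_disjoint_on_Ioc_succ
    have hsum : Summable fun i => ∫ t in I i, φ t / t ^ 2 :=
      (hasSum_integral_iUnion (fun _ => measurableSet_Ioc) hdisj (hint.mono_set hsub)).summable
    have hone : ∀ i : ℕ, (1 : ℝ) ≤ 2 ^ i := fun i => one_le_pow₀ one_le_two
    refine .of_nonneg_of_le (fun i => ?_) (fun i => ?_) (hsum.mul_left 4)
    · push_cast
      exact div_nonneg (h₀ _ (hone i)) (by positivity)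
    · push_cast
      have hI : I i = Set.Ioc (2 ^ i) (2 * 2 ^ i) := by simp only [I, pow_succ']
      rw [hI]
      exact div_le_four_mul_setIntegral_Ioc_div_sq h₀ hmono (hone i)
        (hint.mono_set (hI ▸ (Set.subset_iUnion I i).trans hsub))

theorem Admissible.isSummableDefect (hφ : Admissible φ) : IsSummableDefect fun n => φ n := by
  obtain ⟨D, h₀, hmono, -, hint, -⟩ := hφ
  exact isSummableDefect_of_integrableOn h₀ hmono (hint 1 le_rfl)

end AdmissibleFunctions

namespace IsPseudoMetric

variable {Γ : Type*} {d : Γ → Γ → ℝ}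

theorem nonneg (h : IsPseudoMetric d) (x y : Γ) : 0 ≤ d x y := by
  obtain ⟨hrefl, hsymm, htri⟩ := h
  linarith [htri x y x, hrefl x, hsymm x y]

theorem abs_sub_le (h : IsPseudoMetric d) (x y x' y' : Γ) :
    |d x y - d x' y'| ≤ d x x' + d y y' := by
  obtain ⟨-, hsymm, htri⟩ := h
  rw [abs_le]
  constructor
  · linarith [htri x' x y', htri x y y', hsymm x x']
  · linarith [htri x x' y, htri x' y' y, hsymm y y']

end IsPseudoMetric

section MetricAbelianMonoid

variable {Γ : Type*} [AddCommMonoid Γ] {d : Γ → Γ → ℝ}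

theorem IsMetricAbelianMonoid.dist_add_add_le (h : IsMetricAbelianMonoid d) (x y x' y' : Γ) :
    d (x + y) (x' + y') ≤ d x x' + d y y' := by
  obtain ⟨⟨-, -, htri⟩, hadd⟩ := h
  calc d (x + y) (x' + y') ≤ d (x + y) (x + y') + d (y' + x) (y' + x') := by
        rw [add_comm y' x, add_comm y' x']
        exact htri _ _ _
    _ ≤ d x x' + d y y' := by linarith [hadd x y y', hadd y' x x']

namespace QuasiLinear

variable {φ φ₁ φ₂ : ℝ → ℝ} {γ γ₁ γ₂ : ℕ → Γ}

theorem almostSubadditive_dist (hγ₁ : QuasiLinear d φ₁ γ₁) (hγ₂ : QuasiLinear d φ₂ γ₂)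
    (h : IsMetricAbelianMonoid d) :
    AlmostSubadditive (fun n => φ₁ n + φ₂ n) fun n => d (γ₁ n) (γ₂ n) := fun m n hm hn => by
  have habs := h.1.abs_sub_le (γ₁ (m + n)) (γ₂ (m + n)) (γ₁ m + γ₁ n) (γ₂ m + γ₂ n)
  dsimp only
  linarith [le_of_abs_le habs, h.dist_add_add_le (γ₁ m) (γ₁ n) (γ₂ m) (γ₂ n), hγ₁.2 m n hm hn,
    hγ₂.2 m n hm hn]

theorem almostSubadditive_dist_nsmul (hγ : QuasiLinear d φ γ) (h : IsMetricAbelianMonoid d) {n : ℕ}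
    (hn : 1 ≤ n) :
    AlmostSubadditive (fun k => φ (n * k : ℕ)) fun k => d (γ (n * k)) (k • γ n) := by
  intro k l hk hl
  have hdefect := hγ.2 (n * k) (n * l) (Nat.mul_pos hn hk) (Nat.mul_pos hn hl)
  have htri := h.1.2.2 (γ (n * k + n * l)) (γ (n * k) + γ (n * l)) (k • γ n + l • γ n)
  simp only [mul_add, add_nsmul]
  linarith [h.dist_add_add_le (γ (n * k)) (γ (n * l)) (k • γ n) (l • γ n)]

theorem dist_nsmul_le (hγ : QuasiLinear d φ γ) (h : IsMetricAbelianMonoid d)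
    (hφ : IsSummableDefect fun n => φ n) {n k : ℕ} (hn : 1 ≤ n) (hk : 1 ≤ k) :
    d (γ (n * k)) (k • γ n) ≤ k * (2 * (n * dyadicTail (fun n => φ n) n)) := by
  have hle := (hγ.almostSubadditive_dist_nsmul h hn).apply_le_mul_dyadicTail_one
    (hφ.comp_mul_left hn) hk
  rwa [dyadicTail_comp_mul_one (fun n => φ n) hn, mul_one, one_nsmul, h.1.1, zero_add] at hle

theorem abs_dist_nsmul_div_sub_le (hγ₁ : QuasiLinear d φ₁ γ₁) (hγ₂ : QuasiLinear d φ₂ γ₂)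
    (h : IsMetricAbelianMonoid d) (hφ₁ : IsSummableDefect fun n => φ₁ n)
    (hφ₂ : IsSummableDefect fun n => φ₂ n) {n k : ℕ} (hn : 1 ≤ n) (hk : 1 ≤ k) :
    |d (k • γ₁ n) (k • γ₂ n) / k / n - d (γ₁ (n * k)) (γ₂ (n * k)) / ((n * k : ℕ) : ℝ)| ≤
      2 * (dyadicTail (fun n => φ₁ n) n + dyadicTail (fun n => φ₂ n) n) := by
  have hnk : (0 : ℝ) < ((n * k : ℕ) : ℝ) := by exact_mod_cast Nat.mul_pos hn hk
  have hdenom : (k * n : ℝ) = ((n * k : ℕ) : ℝ) := by push_cast; ring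
  rw [div_div, hdenom, ← sub_div, abs_div, abs_of_pos hnk, div_le_iff₀ hnk]
  calc |d (k • γ₁ n) (k • γ₂ n) - d (γ₁ (n * k)) (γ₂ (n * k))|
      ≤ d (γ₁ (n * k)) (k • γ₁ n) + d (γ₂ (n * k)) (k • γ₂ n) := by
        rw [abs_sub_comm]
        exact h.1.abs_sub_le _ _ _ _
    _ ≤ k * (2 * (n * dyadicTail (fun n => φ₁ n) n)) +
          k * (2 * (n * dyadicTail (fun n => φ₂ n) n)) :=
        add_le_add (hγ₁.dist_nsmul_le h hφ₁ hn hk) (hγ₂.dist_nsmul_le h hφ₂ hn hk)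
    _ = _ := by push_cast; ring

end QuasiLinear

end MetricAbelianMonoid

theorem dista_d_eq_dista_delta_general {Γ : Type*} [AddCommMonoid Γ]
    {d : Γ → Γ → ℝ} (h : IsMetricAbelianMonoid d)
    {δ : Γ → Γ → ℝ}
    (hδ : ∀ x y : Γ, Tendsto (fun k : ℕ => d (k • x) (k • y) / k) atTop (nhds (δ x y)))
    {φ₁ φ₂ : ℝ → ℝ} (hφ₁ : IsSummableDefect fun n => φ₁ n) (hφ₂ : IsSummableDefect fun n => φ₂ n)
    {γ₁ γ₂ : ℕ → Γ} (hγ₁ : QuasiLinear d φ₁ γ₁) (hγ₂ : QuasiLinear d φ₂ γ₂) :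
    ∃ L : ℝ,
      Tendsto (fun n : ℕ => d (γ₁ n) (γ₂ n) / n) atTop (nhds L) ∧
      Tendsto (fun n : ℕ => δ (γ₁ n) (γ₂ n) / n) atTop (nhds L) := by
  have hbdd : BddBelow (Set.range fun n : ℕ => d (γ₁ n) (γ₂ n) / n) :=
    ⟨0, Set.forall_mem_range.2 fun n => div_nonneg (h.1.nonneg _ _) n.cast_nonneg⟩
  obtain ⟨L, hL⟩ := (hγ₁.almostSubadditive_dist hγ₂ h).exists_tendsto_div (hφ₁.add hφ₂) hbdd
  refine ⟨L, hL, ?_⟩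
  set ε : ℕ → ℝ := fun n => 2 * (dyadicTail (fun n => φ₁ n) n + dyadicTail (fun n => φ₂ n) n)
  have hε : Tendsto ε atTop (nhds 0) := by
    simpa using (hφ₁.tendsto_dyadicTail.add hφ₂.tendsto_dyadicTail).const_mul 2
  refine tendsto_sub_nhds_zero_iff.1 (squeeze_zero_norm' ?_ hε)
  filter_upwards [eventually_ge_atTop 1] with n hn
  have hsub : Tendsto (fun k : ℕ => d (γ₁ (n * k)) (γ₂ (n * k)) / ((n * k : ℕ) : ℝ)) atTop
      (nhds L) :=
    hL.comp (tendsto_id.const_mul_atTop' hn)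
  refine le_of_tendsto ((((hδ (γ₁ n) (γ₂ n)).div_const (n : ℝ)).sub hsub).norm) ?_
  filter_upwards [eventually_ge_atTop 1] with k hk using
    hγ₁.abs_dist_nsmul_div_sub_le hγ₂ h hφ₁ hφ₂ hn hk

/-- The asymptotic distances computed with `d` and with the induced homogeneous
pseudometric `𝛿` coincide on `d`-quasi-linear sequences. -/
theorem dista_d_eq_dista_delta {Γ : Type*} [AddCommMonoid Γ]
    (d : Γ → Γ → ℝ) (h : IsMetricAbelianMonoid d)
    (δ : Γ → Γ → ℝ)
    (hδ : ∀ x y : Γ, Filter.Tendsto (fun k : ℕ => d (k • x) (k • y) / k)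
      Filter.atTop (nhds (δ x y)))
    (φ : ℝ → ℝ) (hφ : Admissible φ) (hφpos : ∀ t : ℝ, 1 ≤ t → 0 < φ t)
    (C₁ C₂ : ℝ) (hC₁ : 0 ≤ C₁) (hC₂ : 0 ≤ C₂)
    (γ₁ γ₂ : ℕ → Γ)
    (hγ₁ : QuasiLinear d (fun t => C₁ * φ t) γ₁)
    (hγ₂ : QuasiLinear d (fun t => C₂ * φ t) γ₂) :
    ∃ L : ℝ,
      Filter.Tendsto (fun n : ℕ => d (γ₁ n) (γ₂ n) / n) Filter.atTop (nhds L) ∧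
      Filter.Tendsto (fun n : ℕ => δ (γ₁ n) (γ₂ n) / n) Filter.atTop (nhds L) := by
  exact dista_d_eq_dista_delta_general h hδ (hφ.isSummableDefect.const_mul hC₁)
    (hφ.isSummableDefect.const_mul hC₂) hγ₁ hγ₂
end
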